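/- arXiv:2309.02439 — 2 statements merged into one kernel-verified Lean document; each statement's English description precedes it below -/
import Mathlib

section
/- Let c ∈ ℝ, x₀ ∈ ℝ, k > 0 and μ ∈ ℝ, and let U₀(x) = 3c · sech²(k(x − x₀)). Then ∫_{−∞}^{∞} ( U₀(x)² + μ·(U₀′(x))² ) dx = 12c²/k + (48/5)·k·c²·μ, where U₀′ denotes the derivative of U₀. -/
open Real MeasureTheory

/-!
Since `tanh′ = sech²`, the substitution `t = tanh y` turns the integral of `sech² y · g (tanh y)`
over `ℝ` into the integral of `g` over `(-1, 1)`. With `y = k (x - x₀)`, both `U₀²` and `U₀′²` have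
this form with `g` a polynomial, because `sech² = 1 - tanh²`.
-/

/-- The hyperbolic secant, whose square is the shape of the solitary wave. It is written as
`1 / cosh x` so that it matches the profile `U₀` definitionally. -/
noncomputable def sech (x : ℝ) : ℝ := 1 / cosh x

lemma sech_pos (x : ℝ) : 0 < sech x := one_div_pos.2 (cosh_pos x)

lemma sech_sq (x : ℝ) : sech x ^ 2 = 1 - tanh x ^ 2 := by
  have hcosh := (cosh_pos x).ne'
  rw [sech, tanh_eq_sinh_div_cosh]
  field_simp
  linarith [cosh_sq x]

lemma hasDerivAt_tanh (x : ℝ) : HasDerivAt tanh (sech x ^ 2) x := by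
  have hcosh := (cosh_pos x).ne'
  rw [sech_sq, tanh_eq_sinh_div_cosh, show tanh = sinh / cosh from funext tanh_eq_sinh_div_cosh]
  refine ((hasDerivAt_sinh x).div (hasDerivAt_cosh x) hcosh).congr_deriv ?_
  field_simp

lemma hasDerivAt_sech_sq (x : ℝ) :
    HasDerivAt (fun y => sech y ^ 2) (-2 * tanh x * sech x ^ 2) x := by
  simp_rw [sech_sq]
  refine (((hasDerivAt_tanh x).pow 2).const_sub 1).congr_deriv ?_
  rw [sech_sq]
  ring

section Substitution

variable {E : Type*} [NormedAddCommGroup E] [NormedSpace ℝ E]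

lemma integrable_sech_sq_smul_comp_tanh_iff {g : ℝ → E} :
    Integrable (fun x => sech x ^ 2 • g (tanh x)) ↔ IntervalIntegrable g volume (-1) 1 := by
  have hsubst := integrableOn_image_iff_integrableOn_abs_deriv_smul MeasurableSet.univ
    (fun x _ => (hasDerivAt_tanh x).hasDerivWithinAt) tanh_injective.injOn g
  simp_rw [tanh_bijOn.image_eq, abs_of_pos (pow_pos (sech_pos _) 2), integrableOn_univ] at hsubst
  rw [← hsubst, intervalIntegrable_iff_integrableOn_Ioo_of_le (by norm_num)]

lemma integral_sech_sq_smul_comp_tanh (g : ℝ → E) :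
    ∫ x, sech x ^ 2 • g (tanh x) = ∫ t in (-1)..1, g t := by
  have hsubst := integral_image_eq_integral_abs_deriv_smul MeasurableSet.univ
    (fun x _ => (hasDerivAt_tanh x).hasDerivWithinAt) tanh_injective.injOn g
  simp_rw [tanh_bijOn.image_eq, abs_of_pos (pow_pos (sech_pos _) 2), setIntegral_univ] at hsubst
  rw [← hsubst, intervalIntegral.integral_of_le (by norm_num), integral_Ioc_eq_integral_Ioo]

end Substitution

lemma tanh_pow_mul_sech_pow_four (n : ℕ) (x : ℝ) :
    tanh x ^ n * sech x ^ 4 = sech x ^ 2 • (tanh x ^ n - tanh x ^ (n + 2)) := by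
  rw [smul_eq_mul, show sech x ^ 4 = sech x ^ 2 * sech x ^ 2 by ring, sech_sq]
  ring

lemma integrable_tanh_pow_mul_sech_pow_four (n : ℕ) :
    Integrable fun x => tanh x ^ n * sech x ^ 4 := by
  simp_rw [tanh_pow_mul_sech_pow_four]
  exact (integrable_sech_sq_smul_comp_tanh_iff (g := fun t => t ^ n - t ^ (n + 2))).2
    (Continuous.intervalIntegrable (by fun_prop) _ _)

lemma integral_tanh_pow_mul_sech_pow_four (n : ℕ) :
    ∫ x, tanh x ^ n * sech x ^ 4 = (1 + (-1) ^ n) * (1 / (n + 1) - 1 / (n + 3)) := by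
  simp_rw [tanh_pow_mul_sech_pow_four]
  rw [integral_sech_sq_smul_comp_tanh fun t => t ^ n - t ^ (n + 2),
    intervalIntegral.integral_sub (intervalIntegral.intervalIntegrable_pow _)
      (intervalIntegral.intervalIntegrable_pow _), integral_pow, integral_pow]
  push_cast
  ring

lemma integrable_sech_pow_four : Integrable fun x => sech x ^ 4 := by
  simpa using integrable_tanh_pow_mul_sech_pow_four 0

lemma integral_sech_pow_four : ∫ x, sech x ^ 4 = 4 / 3 := by
  convert integral_tanh_pow_mul_sech_pow_four 0 using 1 <;> norm_num

lemma integral_tanh_sq_mul_sech_pow_four : ∫ x, tanh x ^ 2 * sech x ^ 4 = 4 / 15 := by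
  rw [integral_tanh_pow_mul_sech_pow_four]
  norm_num

lemma deriv_const_mul_sech_mul_sub_sq (a k x₀ x : ℝ) :
    deriv (fun y => a * sech (k * (y - x₀)) ^ 2) x =
      -2 * a * k * (tanh (k * (x - x₀)) * sech (k * (x - x₀)) ^ 2) := by
  have hphase : HasDerivAt (fun y => k * (y - x₀)) (k * 1) x :=
    ((hasDerivAt_id x).sub_const x₀).const_mul k
  refine (((hasDerivAt_sech_sq _).comp x hphase).const_mul a).deriv.trans ?_
  ring

/-- The second invariant of the EW equation on the solitary-wave profile
`U₀(x) = 3c·sech²(k(x−x₀))`: `∫ (U₀² + μ·U₀′²) dx = 12c²/k + (48/5)kc²μ`. -/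
theorem ew_second_invariant_solitary_wave
    (c x₀ k μ : ℝ) (hk : 0 < k)
    (U₀ : ℝ → ℝ)
    (hU₀ : ∀ x, U₀ x = 3 * c * (1 / Real.cosh (k * (x - x₀))) ^ 2) :
    ∫ x : ℝ, (U₀ x ^ 2 + μ * (deriv U₀ x) ^ 2)
      = 12 * c ^ 2 / k + (48 / 5) * k * c ^ 2 * μ := by
  obtain rfl : U₀ = fun x => 3 * c * sech (k * (x - x₀)) ^ 2 := funext hU₀
  let F (y : ℝ) : ℝ :=
    9 * c ^ 2 * sech y ^ 4 + 36 * c ^ 2 * k ^ 2 * μ * (tanh y ^ 2 * sech y ^ 4)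
  have hF : ∫ y, F y = 9 * c ^ 2 * (4 / 3) + 36 * c ^ 2 * k ^ 2 * μ * (4 / 15) := by
    rw [integral_add (integrable_sech_pow_four.const_mul _)
      ((integrable_tanh_pow_mul_sech_pow_four 2).const_mul _), integral_const_mul,
      integral_const_mul, integral_sech_pow_four, integral_tanh_sq_mul_sech_pow_four]
  calc ∫ x, ((3 * c * sech (k * (x - x₀)) ^ 2) ^ 2 +
        μ * deriv (fun x => 3 * c * sech (k * (x - x₀)) ^ 2) x ^ 2)
    _ = ∫ x, F (k * (x - x₀)) := by
      congr! 2 with x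
      rw [deriv_const_mul_sech_mul_sub_sq]
      ring
    _ = k⁻¹ * ∫ y, F y := by
      rw [integral_sub_right_eq_self (fun x => F (k * x)), Measure.integral_comp_mul_left,
        abs_of_pos (inv_pos.2 hk), smul_eq_mul]
    _ = 12 * c ^ 2 / k + 48 / 5 * k * c ^ 2 * μ := by
      rw [hF]
      field_simp
      ring
end

section
/- Let μ ∈ ℝ, U₀ ∈ ℝ, and let U : ℝ × ℝ → ℝ be a smooth solution of the EW equation ∂ₜU + U·∂ₓU − μ·∂ₓ∂ₓ∂ₜU = 0. Fix t ∈ ℝ and assume: (i) x ↦ ∂ₜU(x,t), x ↦ ∂ₓ∂ₓ∂ₜU(x,t) and x ↦ U(x,t)²·∂ₜU(x,t) are integrable on ℝ; (ii) U(x,t) → U₀ as x → −∞ and U(x,t) → 0 as x → +∞; (iii) ∂ₜU(x,t) → 0 and ∂ₓ∂ₜU(x,t) → 0 as x → ±∞; (iv) the antiderivative g(x) = ∫_{−∞}^{x} ( ∂ₜU(y,t) − μ·∂ₓ∂ₓ∂ₜU(y,t) ) dy satisfies g(x) = (U₀² − U(x,t)²)/2 for all x. Then ∫_{−∞}^{∞}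 3·U(x,t)²·∂ₜU(x,t) dx = (3/4)·U₀⁴; that is, in the undular bore setting the third invariant I₃ = ∫ U³ dx increases at the constant rate M₃ = (3/4)U₀⁴. -/
open Real MeasureTheory Filter

/-!
With `q = U²/2 - μ Uₓₜ`, the EW equation reads `Uₜ = -qₓ`. Hence
`(q² - μ Uₜ²)ₓ = -2 Uₜ (q + μ Uₓₜ) = -U² Uₜ`, which is the local conservation law
`(U³/3)ₜ + (q² - μ Uₜ²)ₓ = 0`. Integrating in `x`, `∫ U² Uₜ` is the difference of the limits of the
flux `q² - μ Uₜ²`; where `U → a` and `Uₜ, Uₓₜ → 0`, this flux tends to `a⁴/4`.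
-/

lemma contDiff_deriv_snd {𝕜 X E : Type*} [NontriviallyNormedField 𝕜]
    [NormedAddCommGroup X] [NormedSpace 𝕜 X] [NormedAddCommGroup E] [NormedSpace 𝕜 E]
    {f : X → 𝕜 → E} {m n : WithTop ℕ∞} (hf : ContDiff 𝕜 n (fun p : X × 𝕜 => f p.1 p.2))
    (hmn : m + 1 ≤ n) (t : 𝕜) : ContDiff 𝕜 m (fun x => deriv (f x) t) := by
  simp only [← fderiv_apply_one_eq_deriv]
  exact (hf.fderiv contDiff_const hmn).clm_apply contDiff_const

/-- The flux of `U³/3` under the EW equation, as a function of the values `u = U`, `v = Uₜ` and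
`w = Uₓₜ` at a point. -/
noncomputable def thirdInvariantFlux (μ u v w : ℝ) : ℝ :=
  (u ^ 2 / 2 - μ * w) ^ 2 - μ * v ^ 2

section Profile

variable {μ : ℝ} {u v w : ℝ → ℝ}

lemma hasDerivAt_thirdInvariantFlux {u' w' x : ℝ}
    (hu : HasDerivAt u u' x) (hv : HasDerivAt v (w x) x) (hw : HasDerivAt w w' x)
    (hEW : v x + u x * u' - μ * w' = 0) :
    HasDerivAt (fun y => thirdInvariantFlux μ (u y) (v y) (w y)) (-(u x ^ 2 * v x)) x := by
  have hq : HasDerivAt (fun y => u y ^ 2 / 2 - μ * w y) (-v x) x :=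
    (((hu.fun_pow 2).div_const 2).sub (hw.const_mul μ)).congr_deriv (by
      push_cast
      linear_combination hEW)
  refine ((hq.fun_pow 2).sub ((hv.fun_pow 2).const_mul μ)).congr_deriv ?_
  push_cast
  ring

lemma tendsto_thirdInvariantFlux {a : ℝ} {l : Filter ℝ} (hu : Tendsto u l (nhds a))
    (hv : Tendsto v l (nhds 0)) (hw : Tendsto w l (nhds 0)) :
    Tendsto (fun x => thirdInvariantFlux μ (u x) (v x) (w x)) l (nhds (a ^ 4 / 4)) := by
  have hlim : (a ^ 2 / 2 - μ * 0) ^ 2 - μ * 0 ^ 2 = a ^ 4 / 4 := by ring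
  rw [← hlim]
  exact ((((hu.pow 2).div_const 2).sub (hw.const_mul μ)).pow 2).sub ((hv.pow 2).const_mul μ)

lemma integral_sq_mul_eq_of_equalWidth {a b : ℝ} {u' w' : ℝ → ℝ}
    (hu : ∀ x, HasDerivAt u (u' x) x) (hv : ∀ x, HasDerivAt v (w x) x)
    (hw : ∀ x, HasDerivAt w (w' x) x) (hEW : ∀ x, v x + u x * u' x - μ * w' x = 0)
    (hint : Integrable (fun x => u x ^ 2 * v x))
    (huBot : Tendsto u atBot (nhds a)) (huTop : Tendsto u atTop (nhds b))
    (hvBot : Tendsto v atBot (nhds 0)) (hvTop : Tendsto v atTop (nhds 0))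
    (hwBot : Tendsto w atBot (nhds 0)) (hwTop : Tendsto w atTop (nhds 0)) :
    ∫ x, u x ^ 2 * v x = (a ^ 4 - b ^ 4) / 4 := by
  have hflux : ∫ x, -(u x ^ 2 * v x) = b ^ 4 / 4 - a ^ 4 / 4 :=
    integral_of_hasDerivAt_of_tendsto
      (fun x => hasDerivAt_thirdInvariantFlux (hu x) (hv x) (hw x) (hEW x)) hint.neg
      (tendsto_thirdInvariantFlux huBot hvBot hwBot)
      (tendsto_thirdInvariantFlux huTop hvTop hwTop)
  rw [integral_neg] at hflux
  linarith

end Profile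

theorem ew_undular_bore_third_invariant_rate_general
    {μ U₀ U₁ t : ℝ} {U : ℝ → ℝ → ℝ} (hU : ContDiff ℝ 3 (fun p : ℝ × ℝ => U p.1 p.2))
    (hEW : ∀ x : ℝ,
      deriv (fun s => U x s) t
        + U x t * deriv (fun y => U y t) x
        - μ * deriv (fun y => deriv (fun z => deriv (fun s => U z s) t) y) x = 0)
    (hint : Integrable (fun x => (U x t) ^ 2 * deriv (fun s => U x s) t))
    (hUBot : Tendsto (fun x => U x t) atBot (nhds U₀))
    (hUTop : Tendsto (fun x => U x t) atTop (nhds U₁))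
    (hUtBot : Tendsto (fun x => deriv (fun s => U x s) t) atBot (nhds 0))
    (hUtTop : Tendsto (fun x => deriv (fun s => U x s) t) atTop (nhds 0))
    (hUxtBot : Tendsto (fun x => deriv (fun z => deriv (fun s => U z s) t) x) atBot (nhds 0))
    (hUxtTop : Tendsto (fun x => deriv (fun z => deriv (fun s => U z s) t) x) atTop (nhds 0)) :
    ∫ x : ℝ, 3 * (U x t) ^ 2 * deriv (fun s => U x s) t = (3 / 4) * (U₀ ^ 4 - U₁ ^ 4) := by
  have hu : Differentiable ℝ (fun x => U x t) :=
    (hU.differentiable (by simp)).comp (differentiable_id.prodMk (differentiable_const t))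
  have hv : ContDiff ℝ 2 (fun x => deriv (fun s => U x s) t) :=
    contDiff_deriv_snd hU (by norm_num) t
  have hw : ContDiff ℝ 1 (deriv fun x => deriv (fun s => U x s) t) := hv.deriv'
  have hrate : ∫ x, (U x t) ^ 2 * deriv (fun s => U x s) t = (U₀ ^ 4 - U₁ ^ 4) / 4 :=
    integral_sq_mul_eq_of_equalWidth (fun x => (hu x).hasDerivAt)
      (fun x => (hv.differentiable (by simp) x).hasDerivAt)
      (fun x => (hw.differentiable (by simp) x).hasDerivAt)
      hEW hint hUBot hUTop hUtBot hUtTop hUxtBot hUxtTop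
  simp only [mul_assoc, integral_const_mul, hrate]
  ring

/-- In the undular bore setting, the third invariant `I₃ = ∫ U³ dx` of the EW equation
increases at the constant rate `M₃ = (3/4)U₀⁴`: `∫ 3U²·Uₜ dx = (3/4)U₀⁴`. -/
theorem ew_undular_bore_third_invariant_rate
    (μ U₀ : ℝ) (U : ℝ → ℝ → ℝ)
    (hreg : ContDiff ℝ (⊤ : ℕ∞) (fun p : ℝ × ℝ => U p.1 p.2))
    (hEW : ∀ x t : ℝ,
      deriv (fun s => U x s) t
        + U x t * deriv (fun y => U y t) x
        - μ * deriv (fun y => deriv (fun z => deriv (fun s => U z s) t) y) x = 0)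
    (t : ℝ)
    (hint₁ : Integrable (fun x => deriv (fun s => U x s) t))
    (hint₂ : Integrable (fun x =>
      deriv (fun y => deriv (fun z => deriv (fun s => U z s) t) y) x))
    (hint₃ : Integrable (fun x => (U x t) ^ 2 * deriv (fun s => U x s) t))
    (hUBot : Tendsto (fun x => U x t) atBot (nhds U₀))
    (hUTop : Tendsto (fun x => U x t) atTop (nhds 0))
    (hUtTop : Tendsto (fun x => deriv (fun s => U x s) t) atTop (nhds 0))
    (hUtBot : Tendsto (fun x => deriv (fun s => U x s) t) atBot (nhds 0))
    (hUxtTop : Tendsto (fun x => deriv (fun z => deriv (fun s => U z s) t) x)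
      atTop (nhds 0))
    (hUxtBot : Tendsto (fun x => deriv (fun z => deriv (fun s => U z s) t) x)
      atBot (nhds 0))
    (hg : ∀ x : ℝ,
      (∫ y in Set.Iic x,
        (deriv (fun s => U y s) t
          - μ * deriv (fun y' => deriv (fun z => deriv (fun s => U z s) t) y') y))
        = (U₀ ^ 2 - (U x t) ^ 2) / 2) :
    ∫ x : ℝ, 3 * (U x t) ^ 2 * deriv (fun s => U x s) t = (3 / 4) * U₀ ^ 4 := by
  simpa using ew_undular_bore_third_invariant_rate_general (contDiff_infty.1 hreg 3)
    (fun x => hEW x t) hint₃ hUBot hUTop hUtBot hUtTop hUxtBot hUxtTop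
end
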